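/- Let x_1,…,x_m ∈ ℝ^d satisfy max_i ‖x_i‖ ≤ 1 and be separable with margin γ ∈ (0,1], let ℓ(z) = log(1 + exp(−z)) be the logistic loss, and consider gradient descent iterates w_1 = 0, w_{t+1} = w_t − ∇L̂(w_t) (step size 1). Then for any T > 4 such that log²(T)/(γ²T) < log 2, and any α ∈ [0,1], at least (1 − 2(log²(T)/(γ²T))^α)·m of the indices i ∈ {1,…,m} satisfy x_iᵀ(w_T/‖w_T‖) > (1−α)γ/2. -/

import Mathlib

open scoped RealInnerProductSpace

/-- The logistic loss lies above its tangent lines. -/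
lemma logistic_tangent_le (a b : ℝ) :
    Real.log (1 + Real.exp (-a)) - Real.exp (-a) / (1 + Real.exp (-a)) * (b - a)
      ≤ Real.log (1 + Real.exp (-b)) := by
  have hA : 0 < 1 + Real.exp (-a) := by positivity
  set p := Real.exp (-a) / (1 + Real.exp (-a)) with hp
  have hp0 : 0 ≤ p := by positivity
  have hp1 : p ≤ 1 := by rw [hp, div_le_one hA]; linarith
  have hpA : p * (1 + Real.exp (-a)) = Real.exp (-a) := by rw [hp]; field_simp
  have hconv := convexOn_exp.2 (Set.mem_univ (0 : ℝ)) (Set.mem_univ (a - b))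
    (sub_nonneg.2 hp1) hp0 (by ring)
  simp only [smul_eq_mul, mul_zero, zero_add, Real.exp_zero, mul_one] at hconv
  rw [Real.le_log_iff_exp_le (by positivity)]
  calc Real.exp (Real.log (1 + Real.exp (-a)) - p * (b - a))
      = (1 + Real.exp (-a)) * Real.exp (p * (a - b)) := by
        rw [show Real.log (1 + Real.exp (-a)) - p * (b - a)
          = Real.log (1 + Real.exp (-a)) + p * (a - b) by ring, Real.exp_add, Real.exp_log hA]
    _ ≤ (1 + Real.exp (-a)) * (1 - p + p * Real.exp (a - b)) := by gcongr
    _ = 1 + Real.exp (-b) := by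
        have h : Real.exp (-b) = Real.exp (-a) * Real.exp (a - b) := by
          rw [← Real.exp_add]; ring_nf
        rw [h]
        linear_combination (Real.exp (a - b) - 1) * hpA

/-- The derivative of the logistic loss. -/
lemma hasDerivAt_logistic (z : ℝ) :
    HasDerivAt (fun z : ℝ => Real.log (1 + Real.exp (-z)))
      (-(Real.exp (-z) / (1 + Real.exp (-z)))) z := by
  have h := (((hasDerivAt_neg z).exp).const_add 1).log (by positivity)
  convert h using 1
  ring

/-- The derivative of the logistic loss is `1`-Lipschitz (one-sided form). -/
lemma logistic_deriv_sub_le {a b : ℝ} (hab : a ≤ b) :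
    Real.exp (-a) / (1 + Real.exp (-a)) - Real.exp (-b) / (1 + Real.exp (-b)) ≤ b - a := by
  have h1 : Real.exp (-b) = Real.exp (-a) * Real.exp (a - b) := by
    rw [← Real.exp_add]; ring_nf
  have h2 := Real.add_one_le_exp (a - b)
  have hpa := Real.exp_pos (-a)
  have hpb := Real.exp_pos (-b)
  rw [div_sub_div _ _ (by positivity) (by positivity), div_le_iff₀ (by positivity)]
  have h3 : Real.exp (-a) - Real.exp (-b) ≤ (b - a) * Real.exp (-a) := by
    rw [h1]; nlinarith
  have h4 : 0 ≤ (b - a) * (1 + Real.exp (-b) + Real.exp (-a) * Real.exp (-b)) :=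
    mul_nonneg (sub_nonneg.2 hab) (by positivity)
  nlinarith

/-- The logistic loss is `1`-smooth. -/
lemma logistic_le_quadratic (a b : ℝ) :
    Real.log (1 + Real.exp (-b)) ≤ Real.log (1 + Real.exp (-a))
      - Real.exp (-a) / (1 + Real.exp (-a)) * (b - a) + (b - a) ^ 2 / 2 := by
  let F : ℝ → ℝ := fun z => (z - a) ^ 2 / 2 - Real.exp (-a) / (1 + Real.exp (-a)) * (z - a)
    - Real.log (1 + Real.exp (-z))
  have hF : ∀ z, HasDerivAt F ((z - a) - Real.exp (-a) / (1 + Real.exp (-a))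
      + Real.exp (-z) / (1 + Real.exp (-z))) z := by
    intro z
    have h1 : HasDerivAt (fun z : ℝ => z - a) 1 z := (hasDerivAt_id z).sub_const a
    have h := (((h1.pow 2).div_const 2).sub
      (h1.const_mul (Real.exp (-a) / (1 + Real.exp (-a))))).sub (hasDerivAt_logistic z)
    refine h.congr_deriv ?_
    ring
  have hcont : Continuous F := continuous_iff_continuousAt.2 fun z => (hF z).continuousAt
  have key : F a ≤ F b := by
    rcases le_total a b with hab | hab
    · refine monotoneOn_of_deriv_nonneg (convex_Ici a) hcont.continuousOn
        (fun z _ => (hF z).differentiableAt.differentiableWithinAt) (fun z hz => ?_)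
        (Set.self_mem_Ici) hab hab
      rw [interior_Ici] at hz
      rw [(hF z).deriv]
      linarith [logistic_deriv_sub_le (le_of_lt hz)]
    · refine antitoneOn_of_deriv_nonpos (convex_Iic a) hcont.continuousOn
        (fun z _ => (hF z).differentiableAt.differentiableWithinAt) (fun z hz => ?_)
        hab (Set.self_mem_Iic) hab
      rw [interior_Iic] at hz
      rw [(hF z).deriv]
      linarith [logistic_deriv_sub_le (le_of_lt hz)]
  simp only [F, sub_self] at key
  norm_num at key
  linarith

section GradientDescent

variable {E : Type*} [NormedAddCommGroup E] [InnerProductSpace ℝ E]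

/-- A unit step of gradient descent on a convex `1`-smooth function. -/
lemma gradient_step {L : E → ℝ} {g : E → E}
    (hconv : ∀ v u, L v + ⟪g v, u - v⟫ ≤ L u)
    (hsmooth : ∀ v u, L u ≤ L v + ⟪g v, u - v⟫ + ‖u - v‖ ^ 2 / 2) (v u : E) :
    ‖v - g v - u‖ ^ 2 ≤ ‖v - u‖ ^ 2 - 2 * (L (v - g v) - L u) := by
  have h1 := hconv v u
  have h2 := hsmooth v (v - g v)
  have h3 : ‖v - g v - u‖ ^ 2 = ‖v - u‖ ^ 2 + 2 * ⟪g v, u - v⟫ + ‖g v‖ ^ 2 := by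
    rw [show v - g v - u = (v - u) - g v by abel, norm_sub_sq_real, real_inner_comm,
      ← neg_sub v u, inner_neg_right]
    ring
  rw [show v - g v - v = -g v by abel, inner_neg_right, real_inner_self_eq_norm_sq, norm_neg] at h2
  linarith

/-- Gradient descent with unit steps on a convex `1`-smooth function does not increase it. -/
lemma gradient_step_le {L : E → ℝ} {g : E → E}
    (hsmooth : ∀ v u, L u ≤ L v + ⟪g v, u - v⟫ + ‖u - v‖ ^ 2 / 2) (v : E) :
    L (v - g v) ≤ L v := by
  have h2 := hsmooth v (v - g v)
  rw [show v - g v - v = -g v by abel, inner_neg_right, real_inner_self_eq_norm_sq, norm_neg] at h2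
  nlinarith [sq_nonneg ‖g v‖]

/-- Regret bound for gradient descent with unit steps started at the origin. -/
lemma gradient_descent_regret {L : E → ℝ} {g : E → E}
    (hconv : ∀ v u, L v + ⟪g v, u - v⟫ ≤ L u)
    (hsmooth : ∀ v u, L u ≤ L v + ⟪g v, u - v⟫ + ‖u - v‖ ^ 2 / 2)
    {w : ℕ → E} (h0 : w 0 = 0) (hrec : ∀ t, w (t + 1) = w t - g (w t)) (n : ℕ) (u : E) :
    ‖w n - u‖ ^ 2 + 2 * n * (L (w n) - L u) ≤ ‖u‖ ^ 2 := by
  induction n with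
  | zero => simp [h0]
  | succ n ih =>
    have h1 := gradient_step hconv hsmooth (w n) u
    have h2 := gradient_step_le hsmooth (w n)
    rw [← hrec] at h1 h2
    have h3 : (n : ℝ) * L (w (n + 1)) ≤ n * L (w n) := by gcongr
    push_cast
    nlinarith

end GradientDescent

section EmpiricalRisk

variable {E : Type*} [NormedAddCommGroup E] [InnerProductSpace ℝ E] {m : ℕ} (x : Fin m → E)

/-- The empirical logistic risk. -/
noncomputable def logisticRisk (v : E) : ℝ :=
  (1 / m) * ∑ i, Real.log (1 + Real.exp (-⟪x i, v⟫))

/-- The gradient of the empirical logistic risk. -/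
noncomputable def logisticRiskGrad (v : E) : E :=
  (1 / m : ℝ) • ∑ i, (-(Real.exp (-⟪x i, v⟫) / (1 + Real.exp (-⟪x i, v⟫)))) • x i

lemma inner_logisticRiskGrad (v u : E) :
    ⟪logisticRiskGrad x v, u⟫ = (1 / m) *
      ∑ i, -(Real.exp (-⟪x i, v⟫) / (1 + Real.exp (-⟪x i, v⟫))) * ⟪x i, u⟫ := by
  simp only [logisticRiskGrad, real_inner_smul_left, sum_inner]

lemma hasGradientAt_logisticRisk [CompleteSpace E] (v : E) :
    HasGradientAt (logisticRisk x) (logisticRiskGrad x v) v := by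
  rw [hasGradientAt_iff_hasFDerivAt]
  have h : ∀ i, HasFDerivAt (fun v => Real.log (1 + Real.exp (-⟪x i, v⟫)))
      ((-(Real.exp (-⟪x i, v⟫) / (1 + Real.exp (-⟪x i, v⟫)))) • innerSL ℝ (x i)) v := fun i =>
    (hasDerivAt_logistic ⟪x i, v⟫).comp_hasFDerivAt v (innerSL ℝ (x i)).hasFDerivAt
  refine ((HasFDerivAt.fun_sum (u := Finset.univ) fun i _ => h i).const_mul
    (1 / m : ℝ)).congr_fderiv ?_
  ext u
  simp [inner_logisticRiskGrad]

lemma logisticRisk_tangent_le (v u : E) :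
    logisticRisk x v + ⟪logisticRiskGrad x v, u - v⟫ ≤ logisticRisk x u := by
  rw [inner_logisticRiskGrad, logisticRisk, logisticRisk, ← mul_add, ← Finset.sum_add_distrib]
  gcongr with i
  rw [inner_sub_right]
  linarith [logistic_tangent_le ⟪x i, v⟫ ⟪x i, u⟫]

lemma logisticRisk_le_quadratic (hm : 0 < m) (hx : ∀ i, ‖x i‖ ≤ 1) (v u : E) :
    logisticRisk x u ≤
      logisticRisk x v + ⟪logisticRiskGrad x v, u - v⟫ + ‖u - v‖ ^ 2 / 2 := by
  have hm' : (m : ℝ) ≠ 0 := by positivity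
  have hq : ‖u - v‖ ^ 2 / 2 = (1 / m) * ∑ _i : Fin m, ‖u - v‖ ^ 2 / 2 := by
    simp; field_simp
  rw [hq, inner_logisticRiskGrad, logisticRisk, logisticRisk, ← mul_add, ← mul_add,
    ← Finset.sum_add_distrib, ← Finset.sum_add_distrib]
  gcongr with i
  have h1 := logistic_le_quadratic ⟪x i, v⟫ ⟪x i, u⟫
  have h2 : (⟪x i, u⟫ - ⟪x i, v⟫) ^ 2 ≤ ‖u - v‖ ^ 2 := by
    rw [← inner_sub_right, sq_le_sq, abs_norm]
    calc |⟪x i, u - v⟫| ≤ ‖x i‖ * ‖u - v‖ := abs_real_inner_le_norm _ _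
      _ ≤ 1 * ‖u - v‖ := by gcongr; exact hx i
      _ = ‖u - v‖ := one_mul _
  rw [inner_sub_right]
  linarith

lemma logisticRisk_pos (hm : 0 < m) (v : E) : 0 < logisticRisk x v := by
  have : Nonempty (Fin m) := ⟨⟨0, hm⟩⟩
  refine mul_pos (by positivity) (Finset.sum_pos (fun i _ => Real.log_pos ?_)
    Finset.univ_nonempty)
  linarith [Real.exp_pos (-⟪x i, v⟫)]

lemma logisticRisk_zero (hm : 0 < m) : logisticRisk x 0 = Real.log 2 := by
  have hm' : (m : ℝ) ≠ 0 := by positivity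
  simp [logisticRisk, hm']
  norm_num

/-- The risk of a vector all of whose margins are at least `r`. -/
lemma logisticRisk_le_of_forall_le (hm : 0 < m) {v : E} {r : ℝ} (h : ∀ i, r ≤ ⟪x i, v⟫) :
    logisticRisk x v ≤ Real.log (1 + Real.exp (-r)) := by
  have hm' : (m : ℝ) ≠ 0 := by positivity
  calc logisticRisk x v ≤ (1 / m) * ∑ _i : Fin m, Real.log (1 + Real.exp (-r)) := by
        unfold logisticRisk
        gcongr with i
        exact h i
    _ = Real.log (1 + Real.exp (-r)) := by simp; field_simp

/-- Markov's inequality for the empirical logistic risk. -/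
lemma exists_card_logistic_le (hm : 0 < m) (v : E) {δ : ℝ} (hδ : 0 < δ) :
    ∃ S : Finset (Fin m), (1 - δ) * m ≤ S.card ∧
      ∀ i ∈ S, Real.log (1 + Real.exp (-⟪x i, v⟫)) ≤ logisticRisk x v / δ := by
  classical
  set c := logisticRisk x v / δ with hc
  have hcpos : 0 < c := div_pos (logisticRisk_pos x hm v) hδ
  refine ⟨Finset.univ.filter fun i => Real.log (1 + Real.exp (-⟪x i, v⟫)) ≤ c, ?_,
    fun i hi => (Finset.mem_filter.1 hi).2⟩
  have hm' : (0 : ℝ) < m := by positivity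
  have hcard := Finset.card_filter_add_card_filter_not (s := (Finset.univ : Finset (Fin m)))
    (fun i => Real.log (1 + Real.exp (-⟪x i, v⟫)) ≤ c)
  rw [Finset.card_univ, Fintype.card_fin] at hcard
  have hcard' := congrArg (Nat.cast : ℕ → ℝ) hcard
  push_cast at hcard'
  set B := Finset.univ.filter fun i => ¬ Real.log (1 + Real.exp (-⟪x i, v⟫)) ≤ c with hB
  have h1 : B.card * c ≤ ∑ i, Real.log (1 + Real.exp (-⟪x i, v⟫)) := by
    calc (B.card : ℝ) * c = ∑ _i ∈ B, c := by simp
      _ ≤ ∑ i ∈ B, Real.log (1 + Real.exp (-⟪x i, v⟫)) :=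
        Finset.sum_le_sum fun i hi => (not_le.1 (Finset.mem_filter.1 hi).2).le
      _ ≤ _ := Finset.sum_le_sum_of_subset_of_nonneg (Finset.subset_univ _) fun i _ _ =>
        Real.log_nonneg (by linarith [Real.exp_pos (-⟪x i, v⟫)])
  have h2 : ∑ i, Real.log (1 + Real.exp (-⟪x i, v⟫)) = m * (δ * c) := by
    rw [hc, mul_div_cancel₀ _ hδ.ne', logisticRisk]
    field_simp
  have h3 : (B.card : ℝ) ≤ δ * m := by
    refine le_of_mul_le_mul_right ?_ hcpos
    linarith
  linarith

end EmpiricalRisk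

/-- Numerical bound that turns the regret bound into the rate `log² T / (γ² T)`. -/
lemma log_one_add_inv_add_le {T : ℕ} (hT : 4 < T) {γ : ℝ} (hγ : γ ∈ Set.Ioc (0 : ℝ) 1) :
    Real.log (1 + 1 / T) + (Real.log T / γ) ^ 2 / (2 * (T - 1))
      ≤ Real.log T ^ 2 / (γ ^ 2 * T) := by
  have hT5 : (5 : ℝ) ≤ T := by exact_mod_cast hT
  have hlog5 : (8 / 5 : ℝ) ≤ Real.log 5 := by
    rw [div_le_iff₀ (by norm_num), mul_comm, ← Nat.cast_ofNat (n := 5), ← Real.log_pow,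
      Real.le_log_iff_exp_le (by norm_num)]
    calc Real.exp 8 = Real.exp 1 ^ 8 := by rw [← Real.exp_nat_mul]; norm_num
      _ ≤ 2.7182818286 ^ 8 := by gcongr; exact Real.exp_one_lt_d9.le
      _ ≤ _ := by norm_num
  have hlog : (8 / 5 : ℝ) ≤ Real.log T :=
    hlog5.trans (Real.log_le_log (by norm_num) hT5)
  have hl2 : (64 / 25 : ℝ) ≤ Real.log T ^ 2 := by nlinarith
  have key : T * Real.log (1 + 1 / T) ≤ 64 / 25 * ((T - 2) / (2 * (T - 1))) := by
    rcases (show T = 5 ∨ 6 ≤ T by omega) with rfl | h6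
    · have : Real.log (1 + 1 / 5) ≤ 19 / 100 := by
        rw [Real.log_le_iff_le_exp (by norm_num)]
        have := Real.quadratic_le_exp_of_nonneg (x := 19 / 100) (by norm_num)
        norm_num at this ⊢
        linarith
      push_cast
      norm_num at this ⊢
      linarith
    · have hT6 : (6 : ℝ) ≤ T := by exact_mod_cast h6
      have h1 : Real.log (1 + 1 / T) ≤ 1 / T := by
        have := Real.log_le_sub_one_of_pos (x := 1 + 1 / (T : ℝ)) (by positivity)
        linarith
      have h2 : T * Real.log (1 + 1 / T) ≤ 1 := by
        calc T * Real.log (1 + 1 / T) ≤ T * (1 / T : ℝ) := by gcongr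
          _ = 1 := by field_simp
      refine h2.trans ?_
      rw [mul_div_assoc', le_div_iff₀ (by linarith)]
      linarith
  have hγ0 := hγ.1
  have hT1 : (0 : ℝ) < T - 1 := by linarith
  have hγ2 : γ ^ 2 ≤ 1 := pow_le_one₀ hγ0.le hγ.2
  have hlp : 0 ≤ T * Real.log (1 + 1 / (T : ℝ)) :=
    mul_nonneg (by positivity) (Real.log_nonneg (by simp))
  have hfrac : 0 ≤ ((T : ℝ) - 2) / (2 * (T - 1)) := div_nonneg (by linarith) (by linarith)
  have h1 : γ ^ 2 * (T * Real.log (1 + 1 / T)) ≤ Real.log T ^ 2 * ((T - 2) / (2 * (T - 1))) :=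
    calc _ ≤ 1 * (T * Real.log (1 + 1 / (T : ℝ))) := by gcongr
      _ ≤ 64 / 25 * (((T : ℝ) - 2) / (2 * (T - 1))) := by rw [one_mul]; exact key
      _ ≤ _ := by gcongr
  rw [le_div_iff₀ (by positivity)]
  have h2 : (Real.log T / γ) ^ 2 / (2 * (T - 1)) * (γ ^ 2 * T)
      = Real.log T ^ 2 - Real.log T ^ 2 * ((T - 2) / (2 * (T - 1))) := by
    field_simp
    ring
  linarith

/-- A point whose logistic loss is at most `L ^ (1 - α) / 2` has margin more than `1 - α` times the
margin at which the logistic loss equals `L`. -/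
lemma lt_margin_of_logistic_le {L β r z : ℝ} (hβ : 0 ≤ β)
    (hL2 : L ≤ Real.log 2) (hr : Real.log (1 + Real.exp (-r)) = L)
    (hz : Real.log (1 + Real.exp (-z)) ≤ L ^ β / 2) : β * r < z := by
  have hL : 0 < L := hr ▸ Real.log_pos (by linarith [Real.exp_pos (-r)])
  have hL1 : L ≤ 1 := hL2.trans (by linarith [Real.log_two_lt_d9])
  have hy0 : 0 < L ^ β := Real.rpow_pos_of_pos hL β
  have hy1 : L ^ β ≤ 1 := Real.rpow_le_one hL.le hL1 hβ
  have h1 : 1 + Real.exp (-z) ≤ Real.exp (L ^ β / 2) :=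
    (Real.log_le_iff_le_exp (by positivity)).1 hz
  have h2 : Real.exp (L ^ β / 2) < 1 + L ^ β := by
    have := Real.exp_bound_div_one_sub_of_interval' (x := L ^ β / 2) (by linarith) (by linarith)
    refine this.trans_le ?_
    rw [div_le_iff₀ (by linarith)]
    nlinarith
  have h3 : L ≤ Real.exp (-r) := by
    have := Real.log_le_sub_one_of_pos (x := 1 + Real.exp (-r)) (by positivity)
    linarith
  have h4 : L ^ β ≤ Real.exp (-(β * r)) := by
    calc L ^ β ≤ Real.exp (-r) ^ β := Real.rpow_le_rpow hL.le h3 hβ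
      _ = Real.exp (-(β * r)) := by rw [← Real.exp_mul]; ring_nf
  have h5 : Real.exp (-z) < Real.exp (-(β * r)) := by linarith
  linarith [Real.exp_lt_exp.1 h5]

/-- Theorem 6 of the paper. For the logistic loss and
gradient descent with step size `1` on a dataset separable with margin `γ`:
for any `T > 4` with `log²(T)/(γ²T) < log 2` and any `α ∈ [0,1]`, at least
`(1 − 2(log²(T)/(γ²T))^α)·m` of the indices `i` satisfy
`xᵢᵀ(w_T/‖w_T‖) > (1−α)γ/2`. -/
theorem stmt_10 {d m : ℕ} (hm : 0 < m)
    (x : Fin m → EuclideanSpace ℝ (Fin d)) (hx : ∀ i, ‖x i‖ ≤ 1)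
    (γ : ℝ) (hγ : γ ∈ Set.Ioc (0 : ℝ) 1)
    (w₀ : EuclideanSpace ℝ (Fin d)) (hw₀ : ‖w₀‖ = 1)
    (hsep : ∀ i, γ ≤ ⟪x i, w₀⟫)
    (L : EuclideanSpace ℝ (Fin d) → ℝ)
    (hL : ∀ v, L v = (1 / m) * ∑ i, Real.log (1 + Real.exp (-⟪x i, v⟫)))
    (w : ℕ → EuclideanSpace ℝ (Fin d)) (hw1 : w 1 = 0)
    (hrec : ∀ t, 1 ≤ t → w (t + 1) = w t - gradient L (w t))
    (T : ℕ) (hT : 4 < T)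
    (hT' : (Real.log T) ^ 2 / (γ ^ 2 * T) < Real.log 2)
    (α : ℝ) (hα : α ∈ Set.Icc (0 : ℝ) 1) :
    ∃ S : Finset (Fin m),
      (1 - 2 * ((Real.log T) ^ 2 / (γ ^ 2 * T)) ^ α) * m ≤ S.card ∧
      ∀ i ∈ S, (1 - α) * γ / 2 < ⟪x i, ‖w T‖⁻¹ • w T⟫ := by
  obtain ⟨n, rfl⟩ : ∃ n, T = n + 1 := ⟨T - 1, by omega⟩
  obtain rfl : L = logisticRisk x := funext hL
  have hconv := logisticRisk_tangent_le x
  have hsmooth := logisticRisk_le_quadratic x hm hx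
  have hγ0 := hγ.1
  have hregret := gradient_descent_regret (w := fun t => w (t + 1)) hconv hsmooth hw1
    (fun t => by rw [hrec (t + 1) (by omega), (hasGradientAt_logisticRisk x _).gradient]) n
  have hcomp : ∀ r, 0 ≤ r →
      logisticRisk x ((r / γ) • w₀) ≤ Real.log (1 + Real.exp (-r)) := fun r hr =>
    logisticRisk_le_of_forall_le x hm fun i => by
      rw [real_inner_smul_right]
      calc r = r / γ * γ := by field_simp
        _ ≤ r / γ * ⟪x i, w₀⟫ := by gcongr; exact hsep i
  have hnorm : ∀ r, 0 ≤ r → ‖(r / γ) • w₀‖ = r / γ := fun r hr => by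
    rw [norm_smul, hw₀, mul_one, Real.norm_of_nonneg (by positivity)]
  set ε := (Real.log ((n + 1 : ℕ) : ℝ)) ^ 2 / (γ ^ 2 * ((n + 1 : ℕ) : ℝ)) with hε
  set v := w (n + 1) with hv
  have hn : (0 : ℝ) < n := by
    have : 0 < n := by omega
    exact_mod_cast this
  have hLpos := logisticRisk_pos x hm v
  have hLε : logisticRisk x v ≤ ε := by
    have hlog : 0 ≤ Real.log ((n + 1 : ℕ) : ℝ) := Real.log_natCast_nonneg _
    have h1 := hregret ((Real.log ((n + 1 : ℕ) : ℝ) / γ) • w₀)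
    have h2 := hcomp _ hlog
    rw [hnorm _ hlog] at h1
    rw [Real.exp_neg, Real.exp_log (by positivity), ← one_div] at h2
    have h3 := log_one_add_inv_add_le hT hγ
    rw [show (((n + 1 : ℕ) : ℝ) - 1) = n by push_cast; ring] at h3
    have h4 : logisticRisk x v - logisticRisk x ((Real.log ((n + 1 : ℕ) : ℝ) / γ) • w₀)
        ≤ (Real.log ((n + 1 : ℕ) : ℝ) / γ) ^ 2 / (2 * n) := by
      rw [le_div_iff₀ (by positivity)]
      nlinarith [sq_nonneg ‖v - (Real.log ((n + 1 : ℕ) : ℝ) / γ) • w₀‖]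
    linarith
  have hL2 : logisticRisk x v < Real.log 2 := hLε.trans_lt hT'
  have hε0 : 0 < ε := hLpos.trans_le hLε
  have hvpos : 0 < ‖v‖ := by
    rw [norm_pos_iff]
    intro h
    rw [h, logisticRisk_zero x hm] at hL2
    exact hL2.false
  obtain ⟨r, hr0, hr⟩ : ∃ r, 0 ≤ r ∧ Real.log (1 + Real.exp (-r)) = logisticRisk x v := by
    have h1 : 0 < Real.exp (logisticRisk x v) - 1 := by
      linarith [Real.add_one_lt_exp hLpos.ne']
    have h2 : Real.exp (logisticRisk x v) < 2 := (Real.lt_log_iff_exp_lt (by norm_num)).1 hL2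
    refine ⟨-Real.log (Real.exp (logisticRisk x v) - 1), ?_, ?_⟩
    · rw [neg_nonneg]
      exact Real.log_nonpos h1.le (by linarith)
    · rw [neg_neg, Real.exp_log h1, add_sub_cancel, Real.log_exp]
  have hvnorm : ‖v‖ ≤ 2 * (r / γ) := by
    have h1 := hregret ((r / γ) • w₀)
    have h2 := (hcomp r hr0).trans hr.le
    have h3 : 0 ≤ 2 * n * (logisticRisk x v - logisticRisk x ((r / γ) • w₀)) :=
      mul_nonneg (by positivity) (sub_nonneg.2 h2)
    have h4 : ‖v - (r / γ) • w₀‖ ≤ ‖(r / γ) • w₀‖ :=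
      le_of_sq_le_sq (by linarith) (norm_nonneg _)
    have h5 := norm_le_norm_sub_add v ((r / γ) • w₀)
    rw [hnorm r hr0] at h4 h5
    linarith
  obtain ⟨S, hS, hSle⟩ := exists_card_logistic_le x hm v (δ := 2 * ε ^ α)
    (mul_pos two_pos (Real.rpow_pos_of_pos hε0 α))
  refine ⟨S, hS, fun i hi => ?_⟩
  have hloss : logisticRisk x v / (2 * ε ^ α) ≤ logisticRisk x v ^ (1 - α) / 2 := by
    rw [Real.rpow_sub hLpos, Real.rpow_one, div_div, mul_comm]
    have := Real.rpow_pos_of_pos hLpos α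
    have := Real.rpow_le_rpow hLpos.le hLε hα.1
    gcongr
  have hlt := lt_margin_of_logistic_le (sub_nonneg.2 hα.2) hL2.le hr ((hSle i hi).trans hloss)
  rw [real_inner_smul_right, inv_mul_eq_div, lt_div_iff₀ hvpos]
  refine lt_of_le_of_lt ?_ hlt
  calc (1 - α) * γ / 2 * ‖v‖ ≤ (1 - α) * γ / 2 * (2 * (r / γ)) := by
        have := sub_nonneg.2 hα.2
        gcongr
    _ = (1 - α) * r := by field_simp
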